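/- arXiv:2307.09399 — 2 statements merged into one kernel-verified Lean document; each statement's English description precedes it below -/
import Mathlib

section
/- For every integer c ≥ 3 and every integer g with 1 ≤ g ≤ ⌊(c−1)/2⌋, one has t(c,g) + t_p(c,g) ≤ t(c,m) + t_p(c,m), where m := ⌊(c+2)/4⌋. (That is, the mode of the genus distribution of 2-bridge knots with crossing number c is ⌊(c+2)/4⌋.) -/
/-- `tKnot c g` is t(c,g), the number of words in the partially double counted set T(c)
representing 2-bridge knots of crossing number `c` and genus `g`, given by the explicit
formula t(c,g) = (-1)^(c-1) * Σ_{n=0}^{c-2g-1} (-1)^n * binom(n+2g-1, n), the sum being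
empty when c - 2g - 1 < 0, and t(c,0) = 0. -/
def tKnot (c g : ℕ) : ℤ :=
  if g = 0 then 0
  else (-1 : ℤ) ^ (c - 1) *
    ∑ n ∈ Finset.range (c - 2 * g), (-1 : ℤ) ^ n * (Nat.choose (n + 2 * g - 1) n)

/-- `tpKnot c g` is t_p(c,g), the number of words of palindromic type representing
2-bridge knots of crossing number `c` and genus `g`, given by the explicit formula
t_p(c,g) = (-1)^(c'-g-1) * Σ_{n=0}^{c'-g-1} (-1)^n * binom(n+g-1, n) with
c' = ⌊(c+1)/2⌋, the sum being empty when c' - g - 1 < 0, and t_p(c,0) = 0. -/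
def tpKnot (c g : ℕ) : ℤ :=
  if g = 0 then 0
  else (-1 : ℤ) ^ ((c + 1) / 2 - g - 1) *
    ∑ n ∈ Finset.range ((c + 1) / 2 - g), (-1 : ℤ) ^ n * (Nat.choose (n + g - 1) n)

/-- alternating sum of binomials in a column -/
def Salt : ℕ → ℕ → ℤ
  | 0, j => (Nat.choose 0 j : ℤ)
  | M + 1, j => (Nat.choose (M + 1) j : ℤ) - Salt M j

theorem Salt_succ (M j : ℕ) : Salt (M + 1) j = (Nat.choose (M + 1) j : ℤ) - Salt M j := rfl

theorem Salt_zero_of_lt (M j : ℕ) (h : M < j) : Salt M j = 0 := by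
  induction M with
  | zero => simp [Salt, Nat.choose_eq_zero_of_lt h]
  | succ M ih => rw [Salt_succ, ih (by omega), Nat.choose_eq_zero_of_lt h]; simp

theorem Salt_self (k : ℕ) : Salt k k = 1 := by
  cases k with
  | zero => simp [Salt]
  | succ k => rw [Salt_succ, Salt_zero_of_lt k (k + 1) (by omega)]; simp

theorem Salt_sum (k N : ℕ) :
    (-1 : ℤ) ^ N * ∑ n ∈ Finset.range (N + 1), (-1 : ℤ) ^ n * (Nat.choose (n + k) n) =
      Salt (N + k) k := by
  induction N with
  | zero => simp [Salt_self]
  | succ N ih =>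
    have e : N + 1 + k = (N + k) + 1 := by omega
    have hs : Nat.choose (N + 1 + k) (N + 1) = Nat.choose (N + k + 1) k := by
      rw [e]; exact Nat.choose_symm_of_eq_add (by omega)
    rw [Finset.sum_range_succ, e, Salt_succ, ← ih, ← e, hs]
    have h1 : (-1 : ℤ) ^ (N + 1) * (-1) ^ (N + 1) = 1 := by
      rw [← mul_pow]; simp
    rw [mul_add, ← mul_assoc _ ((-1 : ℤ) ^ (N + 1)), h1, pow_succ]
    rw [e]
    ring

theorem Salt_pascal (M j : ℕ) : Salt (M + 1) (j + 1) = Salt M (j + 1) + Salt M j := by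
  induction M with
  | zero =>
    rcases j with _ | j
    · simp [Salt]
    · simp [Salt, Nat.choose_eq_zero_of_lt (show 1 < j + 1 + 1 by omega)]
  | succ M ih =>
    have h1 := Salt_succ (M + 1) (j + 1)
    have h2 := Salt_succ M j
    have h3 := Salt_succ M (j + 1)
    have h4 := Nat.choose_succ_succ (M + 1) j
    simp only [Nat.succ_eq_add_one] at h4
    zify at h4
    linarith

theorem Salt_two (M j : ℕ) : Salt (M + 2) (j + 1) = Salt M (j + 1) + (Nat.choose (M + 1) j : ℤ) := by
  rw [Salt_succ, Salt_succ, Nat.choose_succ_succ]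
  push_cast; ring

theorem Salt_rel (M j : ℕ) : 2 * Salt M (j + 1) + Salt M j = (Nat.choose (M + 1) (j + 1) : ℤ) := by
  have h1 := Salt_pascal M j
  have h2 := Salt_succ M (j + 1)
  linarith

theorem Salt_col0 (M : ℕ) : 0 ≤ Salt M 0 ∧ Salt M 0 ≤ 1 := by
  induction M with
  | zero => simp [Salt]
  | succ M ih => rw [Salt_succ]; simp; omega

theorem conv_ineq (r d : ℕ) : (3 * Nat.choose (2 * r + 5 + d) (r + 1) : ℤ) ≤
    2 * Nat.choose (2 * r + 5 + d) (r + 2) + Nat.choose (2 * r + 5 + d) r := by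
  have h1 := Nat.choose_succ_right_eq (2 * r + 5 + d) r
  have h2 := Nat.choose_succ_right_eq (2 * r + 5 + d) (r + 1)
  rw [show 2 * r + 5 + d - r = r + 5 + d by omega] at h1
  rw [show 2 * r + 5 + d - (r + 1) = r + 4 + d by omega] at h2
  generalize Nat.choose (2 * r + 5 + d) r = a at *
  generalize Nat.choose (2 * r + 5 + d) (r + 1) = b at *
  rw [show r + 1 + 1 = r + 2 by omega] at h2
  generalize Nat.choose (2 * r + 5 + d) (r + 2) = e at *
  zify at h1 h2
  have key : ((r : ℤ) + 1) * (r + 2) * (2 * e + a - 3 * b) = a * (d * r + 12 + 12 * d + 2 * d ^ 2) := by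
    linear_combination (2 * (r : ℤ) + 2) * h2 + (2 * (r + 4 + d) - 3 * (r + 2) : ℤ) * h1
  have hp : (0 : ℤ) ≤ a * (d * r + 12 + 12 * d + 2 * d ^ 2) := by positivity
  rw [← key] at hp
  have := nonneg_of_mul_nonneg_right hp (by positivity)
  linarith

theorem Salt_inc : ∀ (j M : ℕ), 2 * j + 2 ≤ M → Salt M j ≤ Salt M (j + 1)
  | 0, M, h => by
    have h1 := Salt_rel M 0
    have h2 := Salt_col0 M
    simp at h1 ⊢
    omega
  | 1, M, h => by
    have h1 := Salt_rel M 0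
    have h3 := Salt_rel M 1
    have h2 := Salt_col0 M
    have h4 := Nat.choose_succ_right_eq (M + 1) 1
    simp at h1 h3 h4 ⊢
    zify at h4 h
    nlinarith
  | j + 2, M, h => by
    have ih := Salt_inc j M (by omega)
    have h1 := Salt_rel M j
    have h2 := Salt_rel M (j + 1)
    have h3 := Salt_rel M (j + 2)
    obtain ⟨d, hd⟩ : ∃ d, M + 1 = 2 * (j + 1) + 5 + d := ⟨M + 1 - (2 * (j + 1) + 5), by omega⟩
    have h4 := conv_ineq (j + 1) d
    rw [← hd] at h4
    simp only [add_assoc, Nat.reduceAdd] at *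
    linarith

theorem Salt_inc' (j M : ℕ) (h : 2 * j + 1 ≤ M) : Salt M j ≤ Salt M (j + 1) := by
  rcases Nat.lt_or_ge M (2 * j + 2) with h' | h'
  · obtain rfl : M = 2 * j + 1 := by omega
    cases j with
    | zero => simp [Salt]
    | succ j =>
      have h1 := Salt_inc j (2 * (j + 1)) (by omega)
      have h2 := Salt_pascal (2 * (j + 1)) (j + 1)
      have h3 := Salt_pascal (2 * (j + 1)) j
      have h4 := Salt_succ (2 * (j + 1)) (j + 1)
      have h5 := Salt_succ (2 * (j + 1)) (j + 1 + 1)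
      have h6 : Nat.choose (2 * (j + 1) + 1) (j + 1) = Nat.choose (2 * (j + 1) + 1) (j + 1 + 1) :=
        Nat.choose_symm_of_eq_add (by omega)
      rw [h6] at h4
      linarith
  · exact Salt_inc j M h'

theorem choose_step (n r : ℕ) (h : 2 * r + 1 ≤ n) : Nat.choose n r ≤ Nat.choose n (r + 1) := by
  have h1 := Nat.choose_succ_right_eq n r
  have h2 : Nat.choose n r * (r + 1) ≤ Nat.choose n r * (n - r) :=
    Nat.mul_le_mul_left _ (by omega)
  rw [← h1] at h2
  exact Nat.le_of_mul_le_mul_right h2 (by omega)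

theorem choose_step' (n r : ℕ) (h : n ≤ 2 * r + 1) : Nat.choose n (r + 1) ≤ Nat.choose n r := by
  have h1 := Nat.choose_succ_right_eq n r
  have h2 : Nat.choose n r * (n - r) ≤ Nat.choose n r * (r + 1) :=
    Nat.mul_le_mul_left _ (by omega)
  rw [← h1] at h2
  exact Nat.le_of_mul_le_mul_right h2 (by omega)

theorem choose_step2 (n r : ℕ) (h : n ≤ 2 * r + 2) : Nat.choose n (r + 2) ≤ Nat.choose n r := by
  rcases Nat.lt_or_ge n (2 * r + 2) with h' | h'
  · exact (choose_step' n (r + 1) (by omega)).trans (choose_step' n r (by omega))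
  · exact (Nat.choose_symm_of_eq_add (by omega)).le

theorem Salt_inc2 (j M : ℕ) (h : 2 * j + 2 ≤ M) : Salt M j ≤ Salt M (j + 2) := by
  have h0 := Salt_inc j M h
  have h1 := Salt_rel M j
  have h2 := Salt_rel M (j + 1)
  have h3 := choose_step (M + 1) (j + 1) (by omega)
  zify at h3
  simp only [add_assoc, Nat.reduceAdd] at *
  linarith

theorem Salt_dec2 : ∀ (M j : ℕ), M ≤ 2 * j + 1 → Salt M (j + 2) ≤ Salt M j
  | 0, j, h => by
    rw [Salt_zero_of_lt 0 (j + 2) (by omega)]; simp [Salt]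
  | 1, j, h => by
    rw [Salt_zero_of_lt 1 (j + 2) (by omega)]
    rcases j with _ | _ | j
    · simp [Salt]
    · simp [Salt]
    · rw [Salt_zero_of_lt 1 _ (by omega)]
  | M + 2, 0, h => by omega
  | M + 2, j + 1, h => by
    have ih := Salt_dec2 M (j + 1) (by omega)
    rw [Salt_two M j, show j + 1 + 2 = (j + 2) + 1 by omega, Salt_two M (j + 2)]
    have h3 := choose_step2 (M + 1) j (by omega)
    zify at h3
    rw [show j + 1 + 2 = (j + 2) + 1 by omega] at ih
    linarith

theorem Salt_dec1 : ∀ (M j : ℕ), M ≤ 2 * j → Salt M (j + 1) ≤ Salt M j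
  | 0, j, h => by
    rw [Salt_zero_of_lt 0 (j + 1) (by omega)]; simp [Salt]
  | 1, j, h => by
    rw [Salt_zero_of_lt 1 (j + 1) (by omega)]
    rcases j with _ | _ | j
    · omega
    · simp [Salt]
    · rw [Salt_zero_of_lt 1 _ (by omega)]
  | M + 2, 0, h => by omega
  | M + 2, j + 1, h => by
    have ih := Salt_dec1 M (j + 1) (by omega)
    rw [Salt_two M j, Salt_two M (j + 1)]
    have h3 := choose_step' (M + 1) j (by omega)
    zify at h3
    linarith

/-- ballot difference C(2k+2,k+1) - C(2k+2,k) -/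
def Dcat (k : ℕ) : ℤ := (Nat.choose (2 * k + 2) (k + 1) : ℤ) - Nat.choose (2 * k + 2) k

theorem Dcat_mono : Monotone Dcat := by
  apply monotone_nat_of_le_succ
  intro k
  unfold Dcat
  have a1 := Nat.choose_succ_succ (2 * k + 3) (k + 1)
  have a2 := Nat.choose_succ_succ (2 * k + 3) k
  have a3 := Nat.choose_succ_succ (2 * k + 2) (k + 1)
  have a4 := Nat.choose_succ_succ (2 * k + 2) k
  have s : Nat.choose (2 * k + 3) (k + 2) = Nat.choose (2 * k + 3) (k + 1) :=
    Nat.choose_symm_of_eq_add (by omega)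
  simp only [Nat.succ_eq_add_one, show 2 * (k + 1) + 2 = 2 * k + 3 + 1 by omega,
    show k + 1 + 1 = k + 2 by omega] at *
  rw [a1, a2, s]
  rcases k with _ | k
  · simp
  · have b := Nat.choose_succ_succ (2 * (k + 1) + 2) k
    have s2 := choose_step (2 * (k + 1) + 2) k (by omega)
    simp only [Nat.succ_eq_add_one, show 2 * (k + 1) + 2 + 1 = 2 * (k + 1) + 3 by omega] at *
    zify at *
    linarith

theorem special (k : ℕ) : Salt (4 * k + 3) (2 * k + 3) + Salt (2 * k + 1) (k + 1) ≤
    Salt (4 * k + 3) (2 * k + 1) + Salt (2 * k + 1) k := by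
  rcases k with _ | k
  · simp [Salt, Nat.choose]
  · have e1 := Salt_two (4 * k + 5) (2 * k + 4)
    have e2 := Salt_two (4 * k + 3) (2 * k + 4)
    have e3 := Salt_two (4 * k + 5) (2 * k + 2)
    have e4 := Salt_two (4 * k + 3) (2 * k + 2)
    have e5 := Salt_two (2 * k + 1) (k + 1)
    have e6 := Salt_two (2 * k + 1) k
    have d1 := Salt_dec2 (4 * k + 3) (2 * k + 3) (by omega)
    have d2 := Salt_dec1 (2 * k + 1) (k + 1) (by omega)
    have s1 : Nat.choose (4 * k + 6) (2 * k + 4) = Nat.choose (4 * k + 6) (2 * k + 2) :=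
      Nat.choose_symm_of_eq_add (by omega)
    have s2 := choose_step' (4 * k + 4) (2 * k + 3) (by omega)
    have s3 : Nat.choose (4 * k + 4) (2 * k + 3) = Nat.choose (4 * k + 4) (2 * k + 1) :=
      Nat.choose_symm_of_eq_add (by omega)
    have m := Dcat_mono (show k ≤ 2 * k + 1 by omega)
    unfold Dcat at m
    simp only [show 2 * (2 * k + 1) + 2 = 4 * k + 4 by omega, show 4 * (k + 1) + 3 = 4 * k + 7 by omega,
      show 2 * (k + 1) + 3 = 2 * k + 5 by omega, show 2 * (k + 1) + 1 = 2 * k + 3 by omega,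
      add_assoc, Nat.reduceAdd] at *
    rw [s3] at s2
    rw [s1] at e1
    zify at s2
    linarith

theorem tKnot_eq (c g : ℕ) (hg' : g + 1 ≤ (c - 1) / 2) :
    tKnot c (g + 1) = Salt (c - 2) (2 * g + 1) := by
  obtain ⟨N, rfl⟩ : ∃ N, c = N + 2 * g + 3 := ⟨c - (2 * g + 3), by omega⟩
  have h := Salt_sum (2 * g + 1) N
  unfold tKnot
  rw [if_neg (by omega), show N + 2 * g + 3 - 2 * (g + 1) = N + 1 by omega,
    show N + 2 * g + 3 - 2 = N + (2 * g + 1) by omega, ← h,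
    show N + 2 * g + 3 - 1 = N + 2 * (g + 1) by omega, pow_add, pow_mul]
  simp only [show ∀ n, n + 2 * (g + 1) - 1 = n + (2 * g + 1) by intro n; omega]
  norm_num

theorem tpKnot_eq (c g : ℕ) (hg' : g + 1 ≤ (c - 1) / 2) :
    tpKnot c (g + 1) = Salt ((c + 1) / 2 - 2) g := by
  obtain ⟨N, hN⟩ : ∃ N, (c + 1) / 2 = N + g + 2 := ⟨(c + 1) / 2 - (g + 2), by omega⟩
  have h := Salt_sum g N
  unfold tpKnot
  rw [if_neg (by omega), hN, show N + g + 2 - (g + 1) = N + 1 by omega,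
    show N + g + 2 - 2 = N + g by omega, ← h, show N + 1 - 1 = N by omega]
  simp only [show ∀ n, n + (g + 1) - 1 = n + g by intro n; omega]

theorem step_up (c g : ℕ) (hc : 3 ≤ c) (h : g + 2 ≤ (c + 2) / 4) :
    tKnot c (g + 1) + tpKnot c (g + 1) ≤ tKnot c (g + 2) + tpKnot c (g + 2) := by
  rw [tKnot_eq c g (by omega), tpKnot_eq c g (by omega), tKnot_eq c (g + 1) (by omega),
    tpKnot_eq c (g + 1) (by omega)]
  exact add_le_add (Salt_inc2 (2 * g + 1) (c - 2) (by omega)) (Salt_inc' g _ (by omega))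

theorem step_down (c g : ℕ) (h : (c + 2) / 4 ≤ g + 1) (h' : g + 2 ≤ (c - 1) / 2) :
    tKnot c (g + 2) + tpKnot c (g + 2) ≤ tKnot c (g + 1) + tpKnot c (g + 1) := by
  rw [tKnot_eq c g (by omega), tpKnot_eq c g (by omega), tKnot_eq c (g + 1) (by omega),
    tpKnot_eq c (g + 1) (by omega)]
  by_cases hs : c = 4 * g + 5
  · subst hs
    have := special g
    rw [show 4 * g + 5 - 2 = 4 * g + 3 by omega, show (4 * g + 5 + 1) / 2 - 2 = 2 * g + 1 by omega]
    exact this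
  · exact add_le_add (Salt_dec2 (c - 2) (2 * g + 1) (by omega)) (Salt_dec1 _ g (by omega))

theorem genus_mode (c g : ℕ) (hc : 3 ≤ c) (hg : 1 ≤ g) (hg' : g ≤ (c - 1) / 2) :
    tKnot c g + tpKnot c g ≤ tKnot c ((c + 2) / 4) + tpKnot c ((c + 2) / 4) := by
  rcases le_total g ((c + 2) / 4) with h | h
  · have key : ∀ m, g ≤ m → m ≤ (c + 2) / 4 →
        tKnot c g + tpKnot c g ≤ tKnot c m + tpKnot c m := by
      intro m hm
      induction m, hm using Nat.le_induction with
      | base => intro _; exact le_rfl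
      | succ m hm ih =>
        intro hle
        obtain ⟨p, rfl⟩ : ∃ p, m = p + 1 := ⟨m - 1, by omega⟩
        exact (ih (by omega)).trans (step_up c p hc hle)
    exact key _ h le_rfl
  · revert hg'
    induction g, h using Nat.le_induction with
    | base => intro _; exact le_rfl
    | succ m hm ih =>
      intro hle
      obtain ⟨p, rfl⟩ : ∃ p, m = p + 1 := ⟨m - 1, by omega⟩
      exact (step_down c p hm hle).trans (ih (by omega) (by omega))
end

section
/- Define, for each integer c ≥ 3, the real numbers E(c) := (g(c) + g_p(c)) / (t(c) + t_p(c)) and Var(c) := (g2(c) + g2_p(c)) / (t(c) + t_p(c)) − E(c)². Then the sequence Var(c) − c/16 + 17/144 tends to 0 as c → ∞. (That is, the variance of the genus of a uniformly random 2-bridge knot with crossing number c approaches c/16 − 17/144 as c → ∞.) -/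
/-- `genusMean c` is E(c) = (g(c) + g_p(c)) / (t(c) + t_p(c)), the mean genus of a
uniformly random 2-bridge knot with crossing number c. -/
noncomputable def genusMean (c : ℕ) : ℝ :=
  ((∑ i ∈ Finset.Icc 1 ((c - 1) / 2), (i : ℤ) * tKnot c i
      + ∑ i ∈ Finset.Icc 1 ((c - 1) / 2), (i : ℤ) * tpKnot c i : ℤ) : ℝ) /
  ((∑ g ∈ Finset.Icc 1 ((c - 1) / 2), tKnot c g
      + ∑ g ∈ Finset.Icc 1 ((c - 1) / 2), tpKnot c g : ℤ) : ℝ)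

/-- `genusVariance c` is Var(c) = (g²(c) + g²_p(c)) / (t(c) + t_p(c)) − E(c)², the
variance of the genus of a uniformly random 2-bridge knot with crossing number c. -/
noncomputable def genusVariance (c : ℕ) : ℝ :=
  ((∑ i ∈ Finset.Icc 1 ((c - 1) / 2), (i : ℤ) ^ 2 * tKnot c i
      + ∑ i ∈ Finset.Icc 1 ((c - 1) / 2), (i : ℤ) ^ 2 * tpKnot c i : ℤ) : ℝ) /
  ((∑ g ∈ Finset.Icc 1 ((c - 1) / 2), tKnot c g
      + ∑ g ∈ Finset.Icc 1 ((c - 1) / 2), tpKnot c g : ℤ) : ℝ) - (genusMean c) ^ 2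

/-- Weighted odd binomial sums. -/
def oddSum (k m : ℕ) : ℤ := ∑ j ∈ Finset.range (m + 1), ((j : ℤ) + 1) ^ k * (m.choose (2 * j + 1))

/-- Weighted even binomial sums. -/
def evenSum (k m : ℕ) : ℤ := ∑ j ∈ Finset.range (m + 1), ((j : ℤ) + 1) ^ k * (m.choose (2 * j))

/-- Moments of `tKnot`, with the range extended. -/
def momT (k c : ℕ) : ℤ := ∑ j ∈ Finset.range c, ((j : ℤ) + 1) ^ k * tKnot c (j + 1)

lemma sum_range_extend {f : ℕ → ℤ} {a b : ℕ} (hab : a ≤ b) (hf : ∀ j, a ≤ j → f j = 0) :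
    ∑ j ∈ Finset.range b, f j = ∑ j ∈ Finset.range a, f j := by
  symm
  apply Finset.sum_subset
  · intro x hx
    simp only [Finset.mem_range] at *
    omega
  · intro x _ hx
    apply hf
    simpa using hx

lemma oddSum_ext (k m N : ℕ) (h : m + 1 ≤ N) :
    ∑ j ∈ Finset.range N, ((j : ℤ) + 1) ^ k * (m.choose (2 * j + 1)) = oddSum k m := by
  apply sum_range_extend h
  intro j hj
  rw [Nat.choose_eq_zero_of_lt (by omega)]
  simp

lemma evenSum_ext (k m N : ℕ) (h : m + 1 ≤ N) :
    ∑ j ∈ Finset.range N, ((j : ℤ) + 1) ^ k * (m.choose (2 * j)) = evenSum k m := by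
  apply sum_range_extend h
  intro j hj
  rw [Nat.choose_eq_zero_of_lt (by omega)]
  simp

lemma oddSum_succ (k m : ℕ) : oddSum k (m + 1) = oddSum k m + evenSum k m := by
  rw [← oddSum_ext k m (m + 1 + 1) (by omega), ← evenSum_ext k m (m + 1 + 1) (by omega), oddSum,
    ← Finset.sum_add_distrib]
  apply Finset.sum_congr rfl
  intro j _
  rw [Nat.choose_succ_succ]
  push_cast
  ring

lemma evenSum_succ (k m : ℕ) : evenSum k (m + 1) = evenSum k m +
    ∑ j ∈ Finset.range (m + 1), ((j : ℤ) + 2) ^ k * (m.choose (2 * j + 1)) := by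
  rw [← evenSum_ext k m (m + 1 + 1) (by omega), evenSum, Finset.sum_range_succ',
    Finset.sum_range_succ' _ (m + 1), add_right_comm, ← Finset.sum_add_distrib]
  congr 1
  · apply Finset.sum_congr rfl
    intro j _
    rw [show 2 * (j + 1) = (2 * j + 1) + 1 by ring, Nat.choose_succ_succ]
    push_cast
    ring
  · simp

lemma evenSum_succ0 (m : ℕ) : evenSum 0 (m + 1) = evenSum 0 m + oddSum 0 m := by
  rw [evenSum_succ, oddSum]
  simp

lemma evenSum_succ1 (m : ℕ) : evenSum 1 (m + 1) = evenSum 1 m + (oddSum 1 m + oddSum 0 m) := by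
  rw [evenSum_succ, oddSum, oddSum, ← Finset.sum_add_distrib]
  congr 1
  apply Finset.sum_congr rfl
  intro j _
  ring

lemma evenSum_succ2 (m : ℕ) :
    evenSum 2 (m + 1) = evenSum 2 m + (oddSum 2 m + 2 * oddSum 1 m + oddSum 0 m) := by
  rw [evenSum_succ, oddSum, oddSum, oddSum, Finset.mul_sum, ← Finset.sum_add_distrib,
    ← Finset.sum_add_distrib]
  congr 1
  apply Finset.sum_congr rfl
  intro j _
  ring

lemma closed_sums (n : ℕ) :
    oddSum 0 (n + 3) = 2 ^ n * 4 ∧ evenSum 0 (n + 3) = 2 ^ n * 4 ∧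
    oddSum 1 (n + 3) = 2 ^ n * ((n : ℤ) + 5) ∧ evenSum 1 (n + 3) = 2 ^ n * ((n : ℤ) + 7) ∧
    4 * oddSum 2 (n + 3) = 2 ^ n * (((n : ℤ) + 3) ^ 2 + 5 * (n + 3) + 4) ∧
    4 * evenSum 2 (n + 3) = 2 ^ n * (((n : ℤ) + 3) ^ 2 + 9 * (n + 3) + 16) := by
  induction n with
  | zero => decide
  | succ n ih =>
    obtain ⟨h1, h2, h3, h4, h5, h6⟩ := ih
    rw [show n + 1 + 3 = (n + 3) + 1 by ring]
    rw [oddSum_succ 0 (n + 3), oddSum_succ 1 (n + 3), oddSum_succ 2 (n + 3),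
      evenSum_succ0 (n + 3), evenSum_succ1 (n + 3), evenSum_succ2 (n + 3)]
    push_cast
    refine ⟨?_, ?_, ?_, ?_, ?_, ?_⟩
    · rw [h1, h2]; ring
    · rw [h1, h2]; ring
    · rw [h3, h4]; ring
    · rw [h3, h4, h1]; ring
    · linear_combination h5 + h6
    · linear_combination h5 + h6 + 8 * h3 + 4 * h1

lemma tKnot_zero_of_le (c i : ℕ) (h : c ≤ 2 * i) : tKnot c i = 0 := by
  unfold tKnot
  rw [Nat.sub_eq_zero_of_le h]
  simp

lemma tKnot_rec (m j : ℕ) :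
    tKnot (m + 2) (j + 1) + tKnot (m + 1) (j + 1) = (m.choose (2 * j + 1) : ℤ) := by
  by_cases h : 2 * j + 1 ≤ m
  · obtain ⟨d, rfl⟩ := Nat.exists_eq_add_of_le h
    unfold tKnot
    rw [if_neg (by omega), if_neg (by omega),
      show 2 * j + 1 + d + 2 - 2 * (j + 1) = d + 1 by omega,
      show 2 * j + 1 + d + 1 - 2 * (j + 1) = d by omega, Finset.sum_range_succ,
      show d + 2 * (j + 1) - 1 = 2 * j + 1 + d by omega,
      Nat.choose_symm_add (a := 2 * j + 1) (b := d),
      show 2 * j + 1 + d + 2 - 1 = 2 * j + d + 2 by omega,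
      show 2 * j + 1 + d + 1 - 1 = 2 * j + d + 1 by omega]
    have e : (-1 : ℤ) ^ (2 * j) = 1 := by simp
    have e2 : (-1 : ℤ) ^ d * (-1 : ℤ) ^ d = 1 := by rw [← mul_pow]; simp
    simp only [pow_add, e]
    linear_combination (((2 * j + 1 + d).choose d : ℕ) : ℤ) * e2
  · rw [tKnot_zero_of_le _ _ (by omega), tKnot_zero_of_le _ _ (by omega),
      Nat.choose_eq_zero_of_lt (by omega)]
    simp

lemma momT_rec (k m : ℕ) : momT k (m + 2) + momT k (m + 1) = oddSum k m := by
  have h : ∑ j ∈ Finset.range (m + 2), ((j : ℤ) + 1) ^ k * tKnot (m + 1) (j + 1)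
      = momT k (m + 1) := by
    apply sum_range_extend (by omega)
    intro j hj
    rw [tKnot_zero_of_le _ _ (by omega), mul_zero]
  rw [← h, momT, ← oddSum_ext k m (m + 2) (by omega), ← Finset.sum_add_distrib]
  apply Finset.sum_congr rfl
  intro j _
  rw [← tKnot_rec]
  ring

lemma sum_eq_momT (k c : ℕ) :
    ∑ i ∈ Finset.Icc 1 ((c - 1) / 2), (i : ℤ) ^ k * tKnot c i = momT k c := by
  have h : momT k c = ∑ j ∈ Finset.range ((c - 1) / 2), ((j : ℤ) + 1) ^ k * tKnot c (j + 1) := by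
    apply sum_range_extend (by omega)
    intro j hj
    rw [tKnot_zero_of_le _ _ (by omega), mul_zero]
  rw [h, Finset.range_eq_Ico, ← Finset.Ico_add_one_right_eq_Icc]
  rw [Finset.sum_Ico_eq_sum_range, Finset.range_eq_Ico]
  apply Finset.sum_congr (by simp)
  intro j _
  rw [add_comm 1 j]
  push_cast
  rfl

lemma momT_abs {f h : ℕ → ℝ} (hf : ∀ n, f (n + 1) + f n = h (n + 1) + h n) (n : ℕ) :
    |f n - h n| = |f 0 - h 0| := by
  induction n with
  | zero => rfl
  | succ n ih =>
    rw [← ih, ← abs_neg (f n - h n)]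
    congr 1
    linarith [hf n]

/-- The normalised main terms of the moments. -/
noncomputable def mainP (k : ℕ) (x : ℝ) : ℝ :=
  if k = 0 then 1 else if k = 1 then x / 4 + 1 / 12 else x ^ 2 / 16 + 5 * x / 48 - 1 / 9

lemma momT_asymp (k : ℕ) (hk : k ≤ 2) :
    ∃ K : ℝ, ∀ c : ℕ, 4 ≤ c → |(momT k c : ℝ) - 2 ^ c / 12 * mainP k c| ≤ K := by
  refine ⟨|(momT k (0 + 4) : ℝ) - 2 ^ (0 + 4) / 12 * mainP k ((0 + 4 : ℕ) : ℝ)|,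
    fun c hc => ?_⟩
  · obtain ⟨n, rfl⟩ := Nat.exists_eq_add_of_le' hc
    refine le_of_eq (momT_abs (f := fun n => (momT k (n + 4) : ℝ))
      (h := fun n => 2 ^ (n + 4) / 12 * mainP k ((n + 4 : ℕ) : ℝ)) ?_ n)
    intro n
    have h := momT_rec k (n + 3)
    obtain ⟨h1, h2, h3, h4, h5, h6⟩ := closed_sums n
    have h' : (momT k (n + 1 + 4) : ℝ) + (momT k (n + 4) : ℝ) = (oddSum k (n + 3) : ℝ) := by
      exact_mod_cast h
    simp only [h']
    interval_cases k
    · rw [h1]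
      simp only [mainP]
      push_cast
      norm_num
      ring
    · rw [h3]
      simp only [mainP]
      push_cast
      norm_num
      ring
    · have h5' : 4 * (oddSum 2 (n + 3) : ℝ) =
          2 ^ n * (((n : ℝ) + 3) ^ 2 + 5 * (n + 3) + 4) := by exact_mod_cast h5
      rw [show (oddSum 2 (n + 3) : ℝ) =
          2 ^ n * (((n : ℝ) + 3) ^ 2 + 5 * (n + 3) + 4) / 4 by linarith]
      simp only [mainP]
      push_cast
      norm_num
      ring

lemma tpKnot_abs (c g : ℕ) : |tpKnot c g| ≤ 2 ^ ((c + 1) / 2) := by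
  unfold tpKnot
  split_ifs with hg
  · simp
  · rw [abs_mul, abs_pow]
    simp only [abs_neg, abs_one, one_pow, one_mul]
    refine (Finset.abs_sum_le_sum_abs _ _).trans ?_
    have h1 : ∀ N : ℕ, ∑ n ∈ Finset.range N, (2 : ℤ) ^ (n + g - 1) ≤ 2 ^ (N + g - 1) := by
      intro N
      induction N with
      | zero => simp
      | succ N ih =>
        rw [Finset.sum_range_succ, show N + 1 + g - 1 = (N + g - 1) + 1 by omega, pow_succ]
        linarith
    by_cases hh : (c + 1) / 2 ≤ g
    · rw [Nat.sub_eq_zero_of_le hh]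
      simp
    · refine le_trans (Finset.sum_le_sum (g := fun n => (2 : ℤ) ^ (n + g - 1)) ?_)
        ((h1 _).trans ?_)
      · intro n _
        rw [abs_mul, abs_pow]
        simp only [abs_neg, abs_one, one_pow, one_mul, Nat.abs_cast]
        exact_mod_cast Nat.choose_le_two_pow _ _
      · exact pow_le_pow_right₀ (by norm_num) (by omega)

/-- Moments of `tpKnot`. -/
def momP (k c : ℕ) : ℤ := ∑ i ∈ Finset.Icc 1 ((c - 1) / 2), (i : ℤ) ^ k * tpKnot c i

lemma momP_abs (k c : ℕ) : |momP k c| ≤ (c : ℤ) * (c ^ k * 2 ^ ((c + 1) / 2)) := by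
  unfold momP
  refine (Finset.abs_sum_le_sum_abs _ _).trans ?_
  refine (Finset.sum_le_card_nsmul _ _ ((c : ℤ) ^ k * 2 ^ ((c + 1) / 2)) ?_).trans ?_
  · intro i hi
    rw [Finset.mem_Icc] at hi
    rw [abs_mul, abs_pow, Nat.abs_cast]
    have : (i : ℤ) ≤ c := by omega
    exact mul_le_mul (pow_le_pow_left₀ (by positivity) this k) (tpKnot_abs c i) (abs_nonneg _)
      (by positivity)
  · rw [nsmul_eq_mul]
    apply mul_le_mul_of_nonneg_right _ (by positivity)
    simp only [Nat.card_Icc]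
    omega

lemma two_pow_half (c : ℕ) : (2 : ℝ) ^ ((c + 1) / 2) ≤ (3 / 2) * (3 / 2) ^ c := by
  calc (2 : ℝ) ^ ((c + 1) / 2) ≤ ((3 / 2) ^ 2) ^ ((c + 1) / 2) :=
        pow_le_pow_left₀ (by norm_num) (by norm_num) _
    _ = (3 / 2) ^ (2 * ((c + 1) / 2)) := by rw [← pow_mul]
    _ ≤ (3 / 2) ^ (c + 1) := pow_le_pow_right₀ (by norm_num) (by omega)
    _ = _ := by ring

/-- Normalised error terms. -/
noncomputable def del (k c : ℕ) : ℝ :=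
  12 * ((momT k c + momP k c : ℤ) : ℝ) / 2 ^ c - mainP k c

lemma del_bound (k : ℕ) (hk : k ≤ 2) :
    ∃ K : ℝ, ∀ c : ℕ, 4 ≤ c → |del k c| ≤ K * ((c : ℝ) ^ 3 * (3 / 4) ^ c) := by
  obtain ⟨K, hK⟩ := momT_asymp k hk
  refine ⟨12 * K + 18, fun c hc => ?_⟩
  have hc1 : (1 : ℝ) ≤ c := by exact_mod_cast (by omega : 1 ≤ c)
  have h1 := hK c hc
  have hK0 : 0 ≤ K := (abs_nonneg _).trans h1
  have h2 : |(momP k c : ℝ)| ≤ (c : ℝ) * (c ^ k * 2 ^ ((c + 1) / 2)) := by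
    exact_mod_cast momP_abs k c
  have h3 : (c : ℝ) * (c ^ k * 2 ^ ((c + 1) / 2)) ≤ c ^ 3 * ((3 / 2) * (3 / 2) ^ c) := by
    rw [← mul_assoc, ← pow_succ']
    exact mul_le_mul (pow_le_pow_right₀ hc1 (by omega)) (two_pow_half c) (by positivity)
      (by positivity)
  have h4 : (1 : ℝ) ≤ c ^ 3 * (3 / 2) ^ c :=
    one_le_mul_of_one_le_of_one_le (one_le_pow₀ hc1) (one_le_pow₀ (by norm_num))
  have h5 : del k c = 12 * (((momT k c : ℝ) - 2 ^ c / 12 * mainP k c) + momP k c) / 2 ^ c := by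
    unfold del
    have : (2 : ℝ) ^ c ≠ 0 := by positivity
    field_simp
    push_cast
    ring
  rw [h5, abs_div, abs_mul, abs_of_pos (by positivity : (0 : ℝ) < 2 ^ c),
    abs_of_pos (by norm_num : (0 : ℝ) < 12), div_le_iff₀ (by positivity)]
  have h6 : (3 / 4 : ℝ) ^ c * 2 ^ c = (3 / 2) ^ c := by rw [← mul_pow]; norm_num
  rw [mul_assoc, mul_assoc _ _ ((2 : ℝ) ^ c), h6]
  have h7 := abs_add_le ((momT k c : ℝ) - 2 ^ c / 12 * mainP k c) (momP k c)
  nlinarith [mul_le_mul_of_nonneg_left h4 hK0]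

lemma del_tendsto (k j : ℕ) (hk : k ≤ 2) :
    Filter.Tendsto (fun c : ℕ => (c : ℝ) ^ j * del k c) Filter.atTop (nhds 0) := by
  obtain ⟨K, hK⟩ := del_bound k hk
  have h := (tendsto_pow_const_mul_const_pow_of_abs_lt_one (j + 3)
    (show |(3 / 4 : ℝ)| < 1 by rw [abs_of_pos] <;> norm_num)).const_mul K
  rw [mul_zero] at h
  refine squeeze_zero_norm' ?_ h
  filter_upwards [Filter.eventually_ge_atTop 4] with c hc
  rw [Real.norm_eq_abs, abs_mul, abs_of_nonneg (by positivity : (0 : ℝ) ≤ (c : ℝ) ^ j)]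
  calc (c : ℝ) ^ j * |del k c| ≤ c ^ j * (K * ((c : ℝ) ^ 3 * (3 / 4) ^ c)) :=
        mul_le_mul_of_nonneg_left (hK c hc) (by positivity)
    _ = _ := by ring

lemma genusVariance_eq (c : ℕ) : genusVariance c =
    (mainP 2 c + del 2 c) / (1 + del 0 c) - ((mainP 1 c + del 1 c) / (1 + del 0 c)) ^ 2 := by
  have h0 : ∑ g ∈ Finset.Icc 1 ((c - 1) / 2), tKnot c g = momT 0 c := by
    rw [← sum_eq_momT]; simp
  have h0' : ∑ g ∈ Finset.Icc 1 ((c - 1) / 2), tpKnot c g = momP 0 c := by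
    simp [momP]
  have h1 : ∑ i ∈ Finset.Icc 1 ((c - 1) / 2), (i : ℤ) * tKnot c i = momT 1 c := by
    rw [← sum_eq_momT]; simp
  have h1' : ∑ i ∈ Finset.Icc 1 ((c - 1) / 2), (i : ℤ) * tpKnot c i = momP 1 c := by
    simp [momP]
  have h2' : ∑ i ∈ Finset.Icc 1 ((c - 1) / 2), (i : ℤ) ^ 2 * tpKnot c i = momP 2 c := rfl
  have e : (1 : ℝ) = mainP 0 c := by simp [mainP]
  have e12 : (12 / 2 ^ c : ℝ) ≠ 0 := by positivity
  unfold genusVariance genusMean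
  rw [h0, h0', h1, h1', sum_eq_momT, h2', e]
  have hd : ∀ k, mainP k c + del k c = (12 / 2 ^ c) * ((momT k c + momP k c : ℤ) : ℝ) := by
    intro k; unfold del; ring
  rw [hd, hd, hd, mul_div_mul_left _ _ e12, mul_div_mul_left _ _ e12]

theorem genusVariance_asymptotic :
    Filter.Tendsto (fun c : ℕ => genusVariance c - (c : ℝ) / 16 + 17 / 144)
      Filter.atTop (nhds 0) := by
  have a0 : Filter.Tendsto (fun c : ℕ => del 0 c) Filter.atTop (nhds 0) := by
    simpa using del_tendsto 0 0 (by norm_num)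
  have a1 : Filter.Tendsto (fun c : ℕ => del 1 c) Filter.atTop (nhds 0) := by
    simpa using del_tendsto 1 0 (by norm_num)
  have a2 : Filter.Tendsto (fun c : ℕ => del 2 c) Filter.atTop (nhds 0) := by
    simpa using del_tendsto 2 0 (by norm_num)
  have b0 : Filter.Tendsto (fun c : ℕ => (c : ℝ) * del 0 c) Filter.atTop (nhds 0) := by
    simpa using del_tendsto 0 1 (by norm_num)
  have b1 : Filter.Tendsto (fun c : ℕ => (c : ℝ) * del 1 c) Filter.atTop (nhds 0) := by
    simpa using del_tendsto 1 1 (by norm_num)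
  have c0 := del_tendsto 0 2 (by norm_num)
  have hden : Filter.Tendsto (fun c : ℕ => (1 + del 0 c) ^ 2) Filter.atTop (nhds 1) := by
    simpa using (a0.const_add 1).pow 2
  -- numerator, with (p2 + d2)(1 + d0) - (p1 + d1)^2 - (x/16 - 17/144)(1 + d0)^2
  have hnum : Filter.Tendsto (fun c : ℕ =>
      ((1 / 16) * ((c : ℝ) ^ 2 * del 0 c) + (5 / 48) * ((c : ℝ) * del 0 c) - (1 / 9) * del 0 c)
      + del 2 c + del 2 c * del 0 c - (1 / 2) * ((c : ℝ) * del 1 c) - (1 / 6) * del 1 c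
      - del 1 c * del 1 c
      - ((1 / 8) * ((c : ℝ) * del 0 c) - (17 / 72) * del 0 c)
      - ((1 / 16) * (((c : ℝ) * del 0 c) * del 0 c) - (17 / 144) * (del 0 c * del 0 c)))
      Filter.atTop (nhds 0) := by
    have := ((((((((c0.const_mul (1 / 16)).add (b0.const_mul (5 / 48))).sub
      (a0.const_mul (1 / 9))).add a2).add (a2.mul a0)).sub (b1.const_mul (1 / 2))).sub
      (a1.const_mul (1 / 6))).sub (a1.mul a1)).sub
      ((b0.const_mul (1 / 8)).sub (a0.const_mul (17 / 72)))
    have := this.sub (((b0.mul a0).const_mul (1 / 16)).sub ((a0.mul a0).const_mul (17 / 144)))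
    simpa using this
  have hq := hnum.div hden one_ne_zero
  rw [zero_div] at hq
  refine hq.congr' ?_
  have hpos : ∀ᶠ c : ℕ in Filter.atTop, del 0 c > -1 :=
    a0.eventually (lt_mem_nhds (by norm_num))
  filter_upwards [hpos] with c hc
  have hne : 1 + del 0 c ≠ 0 := by linarith
  simp only [Pi.div_apply]
  rw [genusVariance_eq, div_eq_iff (pow_ne_zero 2 hne)]
  have e1 : mainP 1 (c : ℝ) = c / 4 + 1 / 12 := by simp [mainP]
  have e2 : mainP 2 (c : ℝ) = (c : ℝ) ^ 2 / 16 + 5 * c / 48 - 1 / 9 := by simp [mainP]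
  rw [e1, e2]
  field_simp
  ring
end
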